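/- Let γ=(F,W,A,r) be a many-to-one assignment market and z a core allocation of v_γ. Then s_{ij}(z)=s_{ji}(z)=0 in each of the following cases: (1) i and j are two distinct firms; (2) i and j are two workers that are assigned to different firms under some optimal matching; (3) i is a firm and j is a worker not assigned to i under some optimal matching. Moreover, for any players i≠j, the maximum defining s_{ij}(z) is attained at an essential coalition. -/

import Mathlib

/-!
If an optimal matching `μ` has no pair across the boundary of a coalition `C`, it splits into a
matching inside `C` and one inside `Cᶜ`, so `v(N) ≤ v(C) + v(Cᶜ)`. A core allocation therefore
gives both `C` and `Cᶜ` excess `0`, the largest excess possible in the core, and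
`s_xy = s_yx = 0` whenever `C` contains exactly one of `x`, `y`. In each of the three cases the
coalition of one firm and its workers under `μ` is such a `C`.

An inessential coalition containing `i` splits into two parts; in the core, the part containing
`i` has at least the same excess. Repeating this leads from a maximizer of the excess to an
essential one, still containing `i` and not `j`.
-/

open Finset
open scoped Classical

noncomputable section

variable {F W : Type*} [Fintype F] [Fintype W]

/-- `μ` is a matching between the firm coalition `S` and the worker coalition `T`:
each firm `i ∈ S` appears in at most `r i` pairs and each worker in `T` in at most one pair. -/
def IsMatching (r : F → ℕ) (S : Finset F) (T : Finset W) (μ : Finset (F × W)) : Prop :=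
  (∀ p ∈ μ, p.1 ∈ S ∧ p.2 ∈ T) ∧
  (∀ i : F, (μ.filter fun p => p.1 = i).card ≤ r i) ∧
  (∀ j : W, (μ.filter fun p => p.2 = j).card ≤ 1)

/-- total value of a matching -/
def matchValue (A : F → W → ℝ) (μ : Finset (F × W)) : ℝ := ∑ p ∈ μ, A p.1 p.2

lemma empty_isMatching (r : F → ℕ) (S : Finset F) (T : Finset W) :
    IsMatching r S T (∅ : Finset (F × W)) := by
  refine ⟨by simp, ?_, ?_⟩ <;> intro _ <;> simp

/-- worth of the coalition formed by firms `S` and workers `T`. -/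
def vGamma (A : F → W → ℝ) (r : F → ℕ) (S : Finset F) (T : Finset W) : ℝ :=
  ((S ×ˢ T).powerset.filter fun μ => IsMatching r S T μ).sup'
    ⟨∅, Finset.mem_filter.mpr ⟨Finset.mem_powerset.mpr (Finset.empty_subset _),
        empty_isMatching r S T⟩⟩ (matchValue A)

/-- firms belonging to a coalition of `F ⊕ W` -/
def firmPart (C : Finset (F ⊕ W)) : Finset F := univ.filter (fun i => Sum.inl i ∈ C)

/-- workers belonging to a coalition of `F ⊕ W` -/
def workerPart (C : Finset (F ⊕ W)) : Finset W := univ.filter (fun j => Sum.inr j ∈ C)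

/-- the coalitional function of the many-to-one assignment game -/
def gameValue (A : F → W → ℝ) (r : F → ℕ) (C : Finset (F ⊕ W)) : ℝ :=
  vGamma A r (firmPart C) (workerPart C)

/-- core membership -/
def inCore {N : Type*} [Fintype N] (v : Finset N → ℝ) (z : N → ℝ) : Prop :=
  (∑ k, z k) = v univ ∧ ∀ C : Finset N, v C ≤ ∑ k ∈ C, z k

/-- optimal matching of the grand coalition -/
def IsOptimalMatching (A : F → W → ℝ) (r : F → ℕ) (μ : Finset (F × W)) : Prop :=
  IsMatching r univ univ μ ∧
  ∀ μ' : Finset (F × W), IsMatching r univ univ μ' → matchValue A μ' ≤ matchValue A μ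

/-- workers assigned to firm `i` under the assignment function `m` -/
def assignedTo (m : W → F) (i : F) : Finset W := univ.filter fun j => m j = i

/-- the matching associated with an assignment function (every worker matched) -/
def matchingOfFn (m : W → F) : Finset (F × W) := univ.image fun j => (m j, j)

/-- `m : W → F` represents an optimal matching of a capacity-balanced market that assigns
exactly `r i` workers to each firm `i` and leaves no worker unmatched. -/
def IsBalancedOptimal (A : F → W → ℝ) (r : F → ℕ) (m : W → F) : Prop :=
  (∀ i : F, (assignedTo m i).card = r i) ∧
  IsOptimalMatching A r (matchingOfFn m)

/-- the projection of the core to the workers' payoffs -/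
def CW (A : F → W → ℝ) (m : W → F) : Set (W → ℝ) :=
  { y | (∀ j : W, 0 ≤ y j ∧ y j ≤ A (m j) j) ∧
        ∀ j k : W, m j ≠ m k → A (m j) k - A (m j) j ≤ y k - y j }

/-- excess of a coalition at a payoff vector -/
def excess {N : Type*} (v : Finset N → ℝ) (z : N → ℝ) (S : Finset N) : ℝ :=
  v S - ∑ k ∈ S, z k

/-- maximum surplus `s_ij(z)` of `i` against `j` at `z` -/
def maxSurplus {N : Type*} (v : Finset N → ℝ) (z : N → ℝ) (i j : N) : ℝ :=
  sSup { e | ∃ S : Finset N, i ∈ S ∧ j ∉ S ∧ e = excess v z S }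

def isImputation {N : Type*} [Fintype N] (v : Finset N → ℝ) (z : N → ℝ) : Prop :=
  (∑ k, z k) = v univ ∧ ∀ k : N, v {k} ≤ z k

def inKernel {N : Type*} [Fintype N] (v : Finset N → ℝ) (z : N → ℝ) : Prop :=
  isImputation v z ∧ ∀ i j : N, i ≠ j → maxSurplus v z i j = maxSurplus v z j i

/-- A coalition is inessential if it admits a nontrivial partition into two coalitions
whose values weakly majorize its own value. -/
def Inessential {N : Type*} (v : Finset N → ℝ) (R : Finset N) : Prop :=
  ∃ S T : Finset N, S.Nonempty ∧ T.Nonempty ∧ Disjoint S T ∧ S ∪ T = R ∧ v R ≤ v S + v T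

def Essential {N : Type*} (v : Finset N → ℝ) (R : Finset N) : Prop :=
  R.Nonempty ∧ ¬ Inessential v R

/-- arcs of the tight digraph on `W ∪ {0}` (node `0` is `none`) -/
def tightArc (A : F → W → ℝ) (m : W → F) (y : W → ℝ) : Option W → Option W → Prop
  | none, none => False
  | none, some k => y k = 0
  | some j, none => y j = A (m j) j
  | some j, some k => m j ≠ m k ∧ y k - y j = A (m j) k - A (m j) j

section CoalitionalGames

variable {N : Type*} {v : Finset N → ℝ} {z : N → ℝ} {S T : Finset N} {i j : N}

lemma excess_union_le_add [DecidableEq N] (hST : Disjoint S T) (hv : v (S ∪ T) ≤ v S + v T) :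
    excess v z (S ∪ T) ≤ excess v z S + excess v z T := by
  unfold excess
  rw [sum_union hST]
  linarith

lemma excess_add_excess_compl [Fintype N] [DecidableEq N] (v : Finset N → ℝ) (z : N → ℝ)
    (S : Finset N) :
    excess v z S + excess v z Sᶜ = v S + v Sᶜ - ∑ k, z k := by
  unfold excess
  rw [← sum_add_sum_compl S z]
  ring

lemma exists_essential_subset (hz : ∀ C, excess v z C ≤ 0) (hi : i ∈ S) :
    ∃ R ⊆ S, i ∈ R ∧ Essential v R ∧ excess v z S ≤ excess v z R := by
  induction S using Finset.strongInduction with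
  | H S ih =>
  by_cases hS : Essential v S
  · exact ⟨S, Subset.rfl, hi, hS, le_rfl⟩
  obtain ⟨P, Q, hP, hQ, hPQ, rfl, hv⟩ : Inessential v S :=
    not_not.mp fun h => hS ⟨⟨i, hi⟩, h⟩
  have hexcess := excess_union_le_add (z := z) hPQ hv
  have hPS : P ⊂ P ∪ Q := left_lt_sup.mpr fun h => hQ.ne_empty (hPQ.symm.eq_bot_of_le h)
  have hQS : Q ⊂ P ∪ Q := right_lt_sup.mpr fun h => hP.ne_empty (hPQ.eq_bot_of_le h)
  rcases mem_union.mp hi with hiP | hiQ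
  · obtain ⟨R, hRP, hiR, hR, hle⟩ := ih P hPS hiP
    exact ⟨R, hRP.trans subset_union_left, hiR, hR, by linarith [hz Q]⟩
  · obtain ⟨R, hRQ, hiR, hR, hle⟩ := ih Q hQS hiQ
    exact ⟨R, hRQ.trans subset_union_right, hiR, hR, by linarith [hz P]⟩

section Finite

variable [Finite N]

lemma finite_setOf_excess (v : Finset N → ℝ) (z : N → ℝ) (i j : N) :
    {e | ∃ S : Finset N, i ∈ S ∧ j ∉ S ∧ e = excess v z S}.Finite :=
  (Set.finite_range (excess v z)).subset fun _ ⟨S, _, _, he⟩ => ⟨S, he.symm⟩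

lemma exists_excess_eq_maxSurplus (v : Finset N → ℝ) (z : N → ℝ) (hij : i ≠ j) :
    ∃ S, i ∈ S ∧ j ∉ S ∧ excess v z S = maxSurplus v z i j := by
  have hne : {e | ∃ S : Finset N, i ∈ S ∧ j ∉ S ∧ e = excess v z S}.Nonempty :=
    ⟨_, {i}, mem_singleton_self i, notMem_singleton.mpr hij.symm, rfl⟩
  obtain ⟨S, hi, hj, hS⟩ := hne.csSup_mem (finite_setOf_excess v z i j)
  exact ⟨S, hi, hj, hS.symm⟩

lemma excess_le_maxSurplus (v : Finset N → ℝ) (z : N → ℝ) (hi : i ∈ S) (hj : j ∉ S) :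
    excess v z S ≤ maxSurplus v z i j :=
  le_csSup (finite_setOf_excess v z i j).bddAbove ⟨S, hi, hj, rfl⟩

lemma exists_essential_excess_eq_maxSurplus (hz : ∀ C, excess v z C ≤ 0) (hij : i ≠ j) :
    ∃ S, i ∈ S ∧ j ∉ S ∧ excess v z S = maxSurplus v z i j ∧ Essential v S := by
  obtain ⟨S, hi, hj, hS⟩ := exists_excess_eq_maxSurplus v z hij
  obtain ⟨R, hRS, hiR, hR, hle⟩ := exists_essential_subset hz hi
  have hjR : j ∉ R := fun h => hj (hRS h)
  exact ⟨R, hiR, hjR, (excess_le_maxSurplus v z hiR hjR).antisymm (hS ▸ hle), hR⟩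

end Finite

lemma maxSurplus_eq_zero (hz : ∀ C, excess v z C ≤ 0) (hi : i ∈ S) (hj : j ∉ S)
    (hS : excess v z S = 0) : maxSurplus v z i j = 0 :=
  IsGreatest.csSup_eq ⟨⟨S, hi, hj, hS.symm⟩, fun _ ⟨T, _, _, he⟩ => he ▸ hz T⟩

section Core

variable [Fintype N]

lemma inCore.excess_nonpos (hz : inCore v z) (S : Finset N) : excess v z S ≤ 0 :=
  sub_nonpos.mpr (hz.2 S)

lemma inCore.excess_eq_zero [DecidableEq N] (hz : inCore v z) (hS : v univ ≤ v S + v Sᶜ) :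
    excess v z S = 0 := by
  linarith [excess_add_excess_compl v z S, hz.1, hz.excess_nonpos S, hz.excess_nonpos Sᶜ]

lemma inCore.maxSurplus_eq_zero_of_separates [DecidableEq N] (hz : inCore v z)
    (hS : v univ ≤ v S + v Sᶜ) (hi : i ∈ S) (hj : j ∉ S) :
    maxSurplus v z i j = 0 ∧ maxSurplus v z j i = 0 := by
  have hSc : v univ ≤ v Sᶜ + v Sᶜᶜ := by rwa [compl_compl, add_comm]
  exact ⟨maxSurplus_eq_zero hz.excess_nonpos hi hj (hz.excess_eq_zero hS),
    maxSurplus_eq_zero hz.excess_nonpos (mem_compl.mpr hj) (fun h => mem_compl.mp h hi)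
      (hz.excess_eq_zero hSc)⟩

end Core

end CoalitionalGames

section Markets

variable {A : F → W → ℝ} {r : F → ℕ} {S : Finset F} {T : Finset W} {μ ν : Finset (F × W)}

omit [Fintype F] [Fintype W] in
lemma IsMatching.subset (hμ : IsMatching r S T μ) (hνμ : ν ⊆ μ) : IsMatching r S T ν :=
  ⟨fun p hp => hμ.1 p (hνμ hp),
    fun i => (card_le_card (filter_subset_filter _ hνμ)).trans (hμ.2.1 i),
    fun j => (card_le_card (filter_subset_filter _ hνμ)).trans (hμ.2.2 j)⟩

omit [Fintype F] [Fintype W] in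
lemma IsMatching.firm_unique (hμ : IsMatching r S T μ) {f g : F} {j : W} (hf : (f, j) ∈ μ)
    (hg : (g, j) ∈ μ) : f = g :=
  congrArg Prod.fst <| card_le_one.mp (hμ.2.2 j) (f, j) (mem_filter.mpr ⟨hf, rfl⟩) (g, j)
    (mem_filter.mpr ⟨hg, rfl⟩)

lemma IsMatching.matchValue_le_vGamma (A : F → W → ℝ) (hμ : IsMatching r S T μ) :
    matchValue A μ ≤ vGamma A r S T :=
  le_sup' (matchValue A) <|
    mem_filter.mpr ⟨mem_powerset.mpr fun p hp => mem_product.mpr (hμ.1 p hp), hμ⟩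

lemma vGamma_le {b : ℝ} (h : ∀ μ, IsMatching r S T μ → matchValue A μ ≤ b) :
    vGamma A r S T ≤ b :=
  sup'_le _ _ fun μ hμ => h μ (mem_filter.mp hμ).2

lemma IsMatching.matchValue_le_gameValue (A : F → W → ℝ) {C : Finset (F ⊕ W)}
    (hμ : IsMatching r S T μ) (hC : ∀ p ∈ μ, Sum.inl p.1 ∈ C ∧ Sum.inr p.2 ∈ C) :
    matchValue A μ ≤ gameValue A r C := by
  refine IsMatching.matchValue_le_vGamma A ⟨fun p hp => ?_, hμ.2⟩
  simpa only [firmPart, workerPart, mem_filter_univ] using hC p hp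

lemma exists_isOptimalMatching (A : F → W → ℝ) (r : F → ℕ) : ∃ μ, IsOptimalMatching A r μ :=
  Set.exists_max_image {μ | IsMatching r univ univ μ} (matchValue A) (Set.toFinite _)
    ⟨∅, empty_isMatching r univ univ⟩

lemma IsOptimalMatching.gameValue_univ_le (hμ : IsOptimalMatching A r μ) :
    gameValue A r univ ≤ matchValue A μ := by
  refine vGamma_le fun ν hν => hμ.2 ν ?_
  exact ⟨fun p _ => ⟨mem_univ p.1, mem_univ p.2⟩, hν.2⟩

lemma IsOptimalMatching.gameValue_univ_le_add_compl (hμ : IsOptimalMatching A r μ)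
    {C : Finset (F ⊕ W)} (hC : ∀ p ∈ μ, (Sum.inl p.1 ∈ C ↔ Sum.inr p.2 ∈ C)) :
    gameValue A r univ ≤ gameValue A r C + gameValue A r Cᶜ := by
  have inside : matchValue A {p ∈ μ | Sum.inl p.1 ∈ C} ≤ gameValue A r C := by
    refine (hμ.1.subset (filter_subset _ μ)).matchValue_le_gameValue A fun p hp => ?_
    obtain ⟨hpμ, hpC⟩ := mem_filter.mp hp
    exact ⟨hpC, (hC p hpμ).mp hpC⟩
  have outside : matchValue A {p ∈ μ | Sum.inl p.1 ∉ C} ≤ gameValue A r Cᶜ := by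
    refine (hμ.1.subset (filter_subset _ μ)).matchValue_le_gameValue A fun p hp => ?_
    obtain ⟨hpμ, hpC⟩ := mem_filter.mp hp
    exact ⟨mem_compl.mpr hpC, mem_compl.mpr fun h => hpC ((hC p hpμ).mpr h)⟩
  calc gameValue A r univ
      ≤ matchValue A μ := hμ.gameValue_univ_le
    _ = matchValue A {p ∈ μ | Sum.inl p.1 ∈ C} + matchValue A {p ∈ μ | Sum.inl p.1 ∉ C} :=
        (sum_filter_add_sum_filter_not μ _ _).symm
    _ ≤ gameValue A r C + gameValue A r Cᶜ := add_le_add inside outside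

/-- The coalition `{i} ∪ μ(i)` of a firm `i` and the workers that `μ` assigns to it. -/
def firmBlock (μ : Finset (F × W)) (i : F) : Finset (F ⊕ W) :=
  ({i} : Finset F).disjSum {j | (i, j) ∈ μ}

omit [Fintype F] in
lemma inl_mem_firmBlock {f i : F} : Sum.inl f ∈ firmBlock μ i ↔ f = i := by
  rw [firmBlock, inl_mem_disjSum, mem_singleton]

omit [Fintype F] in
lemma inr_mem_firmBlock {i : F} {j : W} : Sum.inr j ∈ firmBlock μ i ↔ (i, j) ∈ μ := by
  rw [firmBlock, inr_mem_disjSum, mem_filter_univ]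

lemma IsOptimalMatching.gameValue_univ_le_firmBlock (hμ : IsOptimalMatching A r μ) (i : F) :
    gameValue A r univ ≤ gameValue A r (firmBlock μ i) + gameValue A r (firmBlock μ i)ᶜ := by
  refine hμ.gameValue_univ_le_add_compl fun ⟨f, j⟩ hfj => ?_
  rw [inl_mem_firmBlock, inr_mem_firmBlock]
  exact ⟨fun hfi => hfi ▸ hfj, hμ.1.firm_unique hfj⟩

lemma IsOptimalMatching.maxSurplus_eq_zero (hμ : IsOptimalMatching A r μ) {z : F ⊕ W → ℝ}
    (hz : inCore (gameValue A r) z) {i : F} {x y : F ⊕ W} (hx : x ∈ firmBlock μ i)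
    (hy : y ∉ firmBlock μ i) :
    maxSurplus (gameValue A r) z x y = 0 ∧ maxSurplus (gameValue A r) z y x = 0 :=
  hz.maxSurplus_eq_zero_of_separates (hμ.gameValue_univ_le_firmBlock i) hx hy

end Markets

theorem maxSurplus_at_core_general (A : F → W → ℝ) (r : F → ℕ)
    (z : F ⊕ W → ℝ) (hz : inCore (gameValue A r) z) :
    (∀ i1 i2 : F, i1 ≠ i2 →
        maxSurplus (gameValue A r) z (Sum.inl i1) (Sum.inl i2) = 0 ∧
        maxSurplus (gameValue A r) z (Sum.inl i2) (Sum.inl i1) = 0) ∧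
    (∀ j k : W,
        (∃ μ, IsOptimalMatching A r μ ∧
          ∃ f1 f2 : F, f1 ≠ f2 ∧ (f1, j) ∈ μ ∧ (f2, k) ∈ μ) →
        maxSurplus (gameValue A r) z (Sum.inr j) (Sum.inr k) = 0 ∧
        maxSurplus (gameValue A r) z (Sum.inr k) (Sum.inr j) = 0) ∧
    (∀ (i : F) (j : W),
        (∃ μ, IsOptimalMatching A r μ ∧ (i, j) ∉ μ) →
        maxSurplus (gameValue A r) z (Sum.inl i) (Sum.inr j) = 0 ∧
        maxSurplus (gameValue A r) z (Sum.inr j) (Sum.inl i) = 0) ∧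
    (∀ i j : F ⊕ W, i ≠ j → ∃ S : Finset (F ⊕ W), i ∈ S ∧ j ∉ S ∧
        excess (gameValue A r) z S = maxSurplus (gameValue A r) z i j ∧
        Essential (gameValue A r) S) := by
  refine ⟨fun i₁ i₂ hne => ?_, ?_, ?_, fun i j hij =>
    exists_essential_excess_eq_maxSurplus hz.excess_nonpos hij⟩
  · obtain ⟨μ, hμ⟩ := exists_isOptimalMatching A r
    exact hμ.maxSurplus_eq_zero hz (inl_mem_firmBlock.mpr rfl)
      (mt inl_mem_firmBlock.mp hne.symm)
  · rintro j k ⟨μ, hμ, f₁, f₂, hne, hj, hk⟩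
    exact hμ.maxSurplus_eq_zero hz (inr_mem_firmBlock.mpr hj)
      fun h => hne (hμ.1.firm_unique (inr_mem_firmBlock.mp h) hk)
  · rintro i j ⟨μ, hμ, hij⟩
    exact hμ.maxSurplus_eq_zero hz (inl_mem_firmBlock.mpr rfl) (mt inr_mem_firmBlock.mp hij)

/-- at any core allocation the maximum surpluses vanish for the listed
pairs, and for any pair of players the maximum surplus is attained at an essential
coalition. -/
theorem maxSurplus_at_core (A : F → W → ℝ) (r : F → ℕ)
    (hA : ∀ i j, 0 ≤ A i j)
    (z : F ⊕ W → ℝ) (hz : inCore (gameValue A r) z) :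
    (∀ i1 i2 : F, i1 ≠ i2 →
        maxSurplus (gameValue A r) z (Sum.inl i1) (Sum.inl i2) = 0 ∧
        maxSurplus (gameValue A r) z (Sum.inl i2) (Sum.inl i1) = 0) ∧
    (∀ j k : W,
        (∃ μ, IsOptimalMatching A r μ ∧
          ∃ f1 f2 : F, f1 ≠ f2 ∧ (f1, j) ∈ μ ∧ (f2, k) ∈ μ) →
        maxSurplus (gameValue A r) z (Sum.inr j) (Sum.inr k) = 0 ∧
        maxSurplus (gameValue A r) z (Sum.inr k) (Sum.inr j) = 0) ∧
    (∀ (i : F) (j : W),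
        (∃ μ, IsOptimalMatching A r μ ∧ (i, j) ∉ μ) →
        maxSurplus (gameValue A r) z (Sum.inl i) (Sum.inr j) = 0 ∧
        maxSurplus (gameValue A r) z (Sum.inr j) (Sum.inl i) = 0) ∧
    (∀ i j : F ⊕ W, i ≠ j → ∃ S : Finset (F ⊕ W), i ∈ S ∧ j ∉ S ∧
        excess (gameValue A r) z S = maxSurplus (gameValue A r) z i j ∧
        Essential (gameValue A r) S) :=
  maxSurplus_at_core_general A r z hz

end
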